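/- Let m ≥ 1, λ ≥ 0, μ > 0, k > 0, and let g : ℝ → ℝ map [0,1] into [0,1]. For the spectral splitting define ψ(ε,d) := (g(d)+k) ψ₀⁺(ε) + ψ₀⁻(ε). Then there exist η > 0 and C > 0 such that for every d ∈ [0,1]: (i) ψ(·,d) is strongly convex with modulus η on Sᵐ, and (ii) ψ(ε,d) ≥ C‖ε‖_F² for all ε ∈ Sᵐ. -/

import Mathlib

open scoped Matrix

noncomputable section

/-- Squared Frobenius norm. -/
def frobSq {m : ℕ} (A : Matrix (Fin m) (Fin m) ℝ) : ℝ := ∑ i, ∑ j, A i j ^ 2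

/-- `ψ₀⁺(ε) = (λ/2)⟨Σᵢ Eig(ε)ᵢ⟩₊² + μ Σᵢ ⟨Eig(ε)ᵢ⟩₊²` of the spectral splitting,
extended by 0 off the set of symmetric (= real Hermitian) matrices. -/
def psiPlusSpec (m : ℕ) (lam mu : ℝ) (A : Matrix (Fin m) (Fin m) ℝ) : ℝ :=
  if h : A.IsHermitian then
    lam / 2 * max (∑ i, h.eigenvalues i) 0 ^ 2 + mu * ∑ i, max (h.eigenvalues i) 0 ^ 2
  else 0

/-- `ψ₀⁻(ε) = (λ/2)⟨Σᵢ Eig(ε)ᵢ⟩₋² + μ Σᵢ ⟨Eig(ε)ᵢ⟩₋²` of the spectral splitting,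
extended by 0 off the set of symmetric (= real Hermitian) matrices. -/
def psiMinusSpec (m : ℕ) (lam mu : ℝ) (A : Matrix (Fin m) (Fin m) ℝ) : ℝ :=
  if h : A.IsHermitian then
    lam / 2 * min (∑ i, h.eigenvalues i) 0 ^ 2 + mu * ∑ i, min (h.eigenvalues i) 0 ^ 2
  else 0

/-- The degraded density `ψ(ε,d) = (g(d)+k) ψ₀⁺(ε) + ψ₀⁻(ε)` with the spectral splitting. -/
def psiSpec (m : ℕ) (lam mu k : ℝ) (g : ℝ → ℝ) (d : ℝ) (A : Matrix (Fin m) (Fin m) ℝ) : ℝ :=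
  (g d + k) * psiPlusSpec m lam mu A + psiMinusSpec m lam mu A

/-- Real orthogonal diagonalisation in explicit form. -/
lemma exists_diag {m : ℕ} {A : Matrix (Fin m) (Fin m) ℝ} (h : A.IsHermitian) :
    ∃ U : Matrix (Fin m) (Fin m) ℝ, U * Uᵀ = 1 ∧ Uᵀ * U = 1 ∧
      A = U * Matrix.diagonal h.eigenvalues * Uᵀ := by
  refine ⟨(h.eigenvectorUnitary : Matrix (Fin m) (Fin m) ℝ), ?_, ?_, ?_⟩
  · have := Unitary.coe_mul_star_self h.eigenvectorUnitary
    simpa [Matrix.star_eq_conjTranspose, Matrix.conjTranspose_eq_transpose_of_trivial] using this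
  · have := Unitary.coe_star_mul_self h.eigenvectorUnitary
    simpa [Matrix.star_eq_conjTranspose, Matrix.conjTranspose_eq_transpose_of_trivial] using this
  · have := h.spectral_theorem
    rw [Unitary.conjStarAlgAut_apply] at this
    simpa [Matrix.star_eq_conjTranspose, Matrix.conjTranspose_eq_transpose_of_trivial,
      Function.comp_def] using this

lemma diag_entry {m : ℕ} (W : Matrix (Fin m) (Fin m) ℝ) (a : Fin m → ℝ) (i : Fin m) :
    (W * Matrix.diagonal a * Wᵀ) i i = ∑ j, W i j ^ 2 * a j := by
  rw [Matrix.mul_apply]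
  refine Finset.sum_congr rfl fun j _ => ?_
  rw [Matrix.mul_diagonal, Matrix.transpose_apply]; ring

lemma row_sum {m : ℕ} {W : Matrix (Fin m) (Fin m) ℝ} (h : W * Wᵀ = 1) (i : Fin m) :
    ∑ j, W i j ^ 2 = 1 := by
  have := congrFun (congrFun h i) i
  rw [Matrix.mul_apply, Matrix.one_apply_eq] at this
  rw [← this]
  exact Finset.sum_congr rfl fun j _ => by rw [Matrix.transpose_apply]; ring

lemma frobSq_eq {m : ℕ} {A : Matrix (Fin m) (Fin m) ℝ} (h : A.IsHermitian) :
    frobSq A = ∑ i, h.eigenvalues i ^ 2 := by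
  have h1 : frobSq A = (A * Aᵀ).trace := by
    simp [frobSq, Matrix.trace, Matrix.mul_apply, pow_two]
  obtain ⟨U, h2, h3, h4⟩ := exists_diag h
  have h5 : A * Aᵀ = U * Matrix.diagonal (fun i => h.eigenvalues i ^ 2) * Uᵀ := by
    conv_lhs => rw [h4]
    rw [Matrix.transpose_mul, Matrix.transpose_mul, Matrix.transpose_transpose,
      Matrix.diagonal_transpose]
    calc _ = U * Matrix.diagonal h.eigenvalues * (Uᵀ * U) *
          Matrix.diagonal h.eigenvalues * Uᵀ := by simp only [Matrix.mul_assoc]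
      _ = _ := by
        rw [h3, Matrix.mul_one, Matrix.mul_assoc U, Matrix.diagonal_mul_diagonal]
        simp only [pow_two]
  rw [h1, h5, Matrix.trace_mul_comm, ← Matrix.mul_assoc, h3, Matrix.one_mul, Matrix.trace_diagonal]

/-- Peierls-type inequality. -/
lemma peierls {m : ℕ} {φ : ℝ → ℝ} (hφ : ConvexOn ℝ Set.univ φ)
    {W : Matrix (Fin m) (Fin m) ℝ} (h1 : W * Wᵀ = 1) (h2 : Wᵀ * W = 1) (a : Fin m → ℝ) :
    ∑ i, φ (∑ j, W i j ^ 2 * a j) ≤ ∑ j, φ (a j) := by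
  calc ∑ i, φ (∑ j, W i j ^ 2 * a j) ≤ ∑ i, ∑ j, W i j ^ 2 * φ (a j) := by
        refine Finset.sum_le_sum fun i _ => ?_
        have := hφ.map_sum_le (t := Finset.univ) (w := fun j => W i j ^ 2) (p := a)
          (fun j _ => sq_nonneg _) (row_sum h1 i) (fun j _ => Set.mem_univ _)
        simpa [smul_eq_mul] using this
    _ = ∑ j, (∑ i, W i j ^ 2) * φ (a j) := by
        rw [Finset.sum_comm]
        simp only [Finset.sum_mul]
    _ = _ := by
        refine Finset.sum_congr rfl fun j _ => ?_
        have := row_sum (W := Wᵀ) (by simpa using h2) j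
        simp only [Matrix.transpose_apply] at this
        rw [this, one_mul]

lemma trace_convex {m : ℕ} {φ : ℝ → ℝ} (hφ : ConvexOn ℝ Set.univ φ)
    {A B : Matrix (Fin m) (Fin m) ℝ} (hA : A.IsHermitian) (hB : B.IsHermitian)
    {t : ℝ} (ht : t ∈ Set.Icc (0 : ℝ) 1) (hC : (t • A + (1 - t) • B).IsHermitian) :
    ∑ i, φ (hC.eigenvalues i)
      ≤ t * ∑ i, φ (hA.eigenvalues i) + (1 - t) * ∑ i, φ (hB.eigenvalues i) := by
  obtain ⟨U, u1, u2, u3⟩ := exists_diag hC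
  obtain ⟨V, v1, v2, v3⟩ := exists_diag hA
  obtain ⟨X, x1, x2, x3⟩ := exists_diag hB
  have key : ∀ {Y : Matrix (Fin m) (Fin m) ℝ}, Y * Yᵀ = 1 → Yᵀ * Y = 1 →
      (Uᵀ * Y) * (Uᵀ * Y)ᵀ = 1 ∧ (Uᵀ * Y)ᵀ * (Uᵀ * Y) = 1 := by
    intro Y y1 y2
    rw [Matrix.transpose_mul, Matrix.transpose_transpose]
    constructor
    · calc _ = Uᵀ * (Y * Yᵀ) * U := by simp only [Matrix.mul_assoc]
        _ = 1 := by rw [y1, Matrix.mul_one, u2]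
    · calc _ = Yᵀ * (U * Uᵀ) * Y := by simp only [Matrix.mul_assoc]
        _ = 1 := by rw [u1, Matrix.mul_one, y2]
  have conj : ∀ (Y : Matrix (Fin m) (Fin m) ℝ) (a : Fin m → ℝ),
      Uᵀ * (Y * Matrix.diagonal a * Yᵀ) * U = (Uᵀ * Y) * Matrix.diagonal a * (Uᵀ * Y)ᵀ := by
    intro Y a
    rw [Matrix.transpose_mul, Matrix.transpose_transpose]
    simp only [Matrix.mul_assoc]
  have hD : Uᵀ * (t • A + (1 - t) • B) * U = Matrix.diagonal hC.eigenvalues := by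
    conv_lhs => rw [u3]
    rw [conj, u2]; simp
  have hc : ∀ i, hC.eigenvalues i = t * (∑ j, (Uᵀ * V) i j ^ 2 * hA.eigenvalues j)
      + (1 - t) * (∑ j, (Uᵀ * X) i j ^ 2 * hB.eigenvalues j) := by
    intro i
    have e := congrFun (congrFun hD i) i
    rw [Matrix.diagonal_apply_eq] at e
    rw [← e, ← diag_entry, ← diag_entry, ← conj, ← conj, ← v3, ← x3]
    simp [Matrix.mul_add, Matrix.add_mul]
  obtain ⟨k1, k2⟩ := key v1 v2
  obtain ⟨l1, l2⟩ := key x1 x2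
  have p1 := peierls hφ k1 k2 hA.eigenvalues
  have p2 := peierls hφ l1 l2 hB.eigenvalues
  have h1t : 0 ≤ 1 - t := by linarith [ht.2]
  calc ∑ i, φ (hC.eigenvalues i)
      ≤ ∑ i, (t * φ (∑ j, (Uᵀ * V) i j ^ 2 * hA.eigenvalues j)
        + (1 - t) * φ (∑ j, (Uᵀ * X) i j ^ 2 * hB.eigenvalues j)) := by
        refine Finset.sum_le_sum fun i _ => ?_
        rw [hc i]
        exact hφ.2 (Set.mem_univ _) (Set.mem_univ _) ht.1 h1t (by ring)
    _ = t * ∑ i, φ (∑ j, (Uᵀ * V) i j ^ 2 * hA.eigenvalues j)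
        + (1 - t) * ∑ i, φ (∑ j, (Uᵀ * X) i j ^ 2 * hB.eigenvalues j) := by
        rw [Finset.sum_add_distrib, Finset.mul_sum, Finset.mul_sum]
    _ ≤ _ := add_le_add (mul_le_mul_of_nonneg_left p1 ht.1) (mul_le_mul_of_nonneg_left p2 h1t)

lemma convex_max_sq : ConvexOn ℝ Set.univ (fun x : ℝ => max x 0 ^ 2) :=
  ((convexOn_id convex_univ).sup (convexOn_const 0 convex_univ)).pow
    (fun x _ => le_max_right x 0) 2

lemma convex_min_sq : ConvexOn ℝ Set.univ (fun x : ℝ => min x 0 ^ 2) := by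
  have h := ((concaveOn_id convex_univ).inf (concaveOn_const (𝕜 := ℝ) (0 : ℝ) convex_univ)).neg.pow
    (fun x _ => by simp) 2
  refine h.congr fun x _ => ?_
  simp

lemma convex_comb {a b : ℝ} (ha : 0 ≤ a) (hb : 0 ≤ b) :
    ConvexOn ℝ Set.univ (fun x : ℝ => a * max x 0 ^ 2 + b * min x 0 ^ 2) :=
  (convex_max_sq.smul ha).add (convex_min_sq.smul hb)

lemma frobSq_comb {m : ℕ} (A B : Matrix (Fin m) (Fin m) ℝ) (t : ℝ) :
    frobSq (t • A + (1 - t) • B)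
      = t * frobSq A + (1 - t) * frobSq B - t * (1 - t) * frobSq (A - B) := by
  simp only [frobSq, Finset.mul_sum, ← Finset.sum_add_distrib, ← Finset.sum_sub_distrib]
  refine Finset.sum_congr rfl fun i _ => Finset.sum_congr rfl fun j _ => ?_
  simp only [Matrix.add_apply, Matrix.smul_apply, Matrix.sub_apply, smul_eq_mul]
  ring

lemma psi_decomp {m : ℕ} (lam mu k : ℝ) (g : ℝ → ℝ) (d κ : ℝ)
    {A : Matrix (Fin m) (Fin m) ℝ} (h : A.IsHermitian) :
    psiSpec m lam mu k g d A = mu * κ * frobSq A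
      + mu * (∑ i, ((g d + k - κ) * max (h.eigenvalues i) 0 ^ 2
          + (1 - κ) * min (h.eigenvalues i) 0 ^ 2))
      + lam / 2 * ((g d + k) * max A.trace 0 ^ 2 + 1 * min A.trace 0 ^ 2) := by
  have htr : A.trace = ∑ i, h.eigenvalues i := by
    simpa using h.trace_eq_sum_eigenvalues
  have hs : ∑ i, h.eigenvalues i ^ 2
      = ∑ i, max (h.eigenvalues i) 0 ^ 2 + ∑ i, min (h.eigenvalues i) 0 ^ 2 := by
    rw [← Finset.sum_add_distrib]
    refine Finset.sum_congr rfl fun i _ => ?_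
    rcases le_total (h.eigenvalues i) 0 with h0 | h0 <;> simp [h0]
  rw [frobSq_eq h, hs, htr, Finset.sum_add_distrib, ← Finset.mul_sum, ← Finset.mul_sum]
  simp only [psiSpec, psiPlusSpec, psiMinusSpec, dif_pos h]
  ring

theorem stmt_11 (m : ℕ) (hm : 1 ≤ m) (lam mu : ℝ) (hlam : 0 ≤ lam) (hmu : 0 < mu)
    (k : ℝ) (hk : 0 < k)
    (g : ℝ → ℝ) (hg : Set.MapsTo g (Set.Icc 0 1) (Set.Icc 0 1)) :
    ∃ η > (0 : ℝ), ∃ C > (0 : ℝ), ∀ d ∈ Set.Icc (0 : ℝ) 1,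
      -- (i) strong convexity with modulus η on Sᵐ
      (∀ A B : Matrix (Fin m) (Fin m) ℝ, A.IsHermitian → B.IsHermitian →
        ∀ t ∈ Set.Icc (0 : ℝ) 1,
          psiSpec m lam mu k g d (t • A + (1 - t) • B)
            ≤ t * psiSpec m lam mu k g d A + (1 - t) * psiSpec m lam mu k g d B
              - η / 2 * (t * (1 - t)) * frobSq (A - B)) ∧
      -- (ii) coercivity uniformly in d
      (∀ ε : Matrix (Fin m) (Fin m) ℝ, ε.IsHermitian →
        C * frobSq ε ≤ psiSpec m lam mu k g d ε) := by
  have hκ : 0 < min k 1 := lt_min hk one_pos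
  refine ⟨2 * (mu * min k 1), by positivity, mu * min k 1, by positivity, fun d hd => ?_⟩
  have hgd := (hg hd).1
  have c1 : 0 ≤ g d + k - min k 1 := by linarith [min_le_left k 1]
  have c2 : 0 ≤ 1 - min k 1 := by linarith [min_le_right k 1]
  have c3 : 0 ≤ g d + k := by linarith
  constructor
  · intro A B hA hB t ht
    have h1t : 0 ≤ 1 - t := by linarith [ht.2]
    have hC : (t • A + (1 - t) • B).IsHermitian := by
      unfold Matrix.IsHermitian at *
      rw [Matrix.conjTranspose_add, Matrix.conjTranspose_smul, Matrix.conjTranspose_smul, hA, hB]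
      simp
    rw [psi_decomp lam mu k g d (min k 1) hA, psi_decomp lam mu k g d (min k 1) hB,
      psi_decomp lam mu k g d (min k 1) hC, frobSq_comb]
    have q1 := mul_le_mul_of_nonneg_left (trace_convex (convex_comb c1 c2) hA hB ht hC) hmu.le
    have q2 := (convex_comb c3 zero_le_one).2 (Set.mem_univ A.trace) (Set.mem_univ B.trace)
      ht.1 h1t (by ring)
    have q3 := mul_le_mul_of_nonneg_left q2 (by positivity : 0 ≤ lam / 2)
    have htr : (t • A + (1 - t) • B).trace = t * A.trace + (1 - t) * B.trace := by
      simp [Matrix.trace_add, Matrix.trace_smul]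
    rw [htr]
    simp only [smul_eq_mul] at q3
    linarith
  · intro ε hε
    rw [psi_decomp lam mu k g d (min k 1) hε]
    have r1 : 0 ≤ mu * (∑ i, ((g d + k - min k 1) * max (hε.eigenvalues i) 0 ^ 2
          + (1 - min k 1) * min (hε.eigenvalues i) 0 ^ 2)) :=
      mul_nonneg hmu.le (Finset.sum_nonneg fun i _ =>
        add_nonneg (mul_nonneg c1 (sq_nonneg _)) (mul_nonneg c2 (sq_nonneg _)))
    have r2 : 0 ≤ lam / 2 * ((g d + k) * max ε.trace 0 ^ 2 + 1 * min ε.trace 0 ^ 2) := by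
      positivity
    linarith
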